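/- arXiv:2208.11010 — 2 statements merged into one kernel-verified Lean document; each statement's English description precedes it below -/
import Mathlib

section
/- Let X be a subset of ℝ^n, let f : ℝ^n → ℝ be differentiable and μ-strongly convex for some μ > 0 (i.e., f(y) ≥ f(x) + ⟨∇f(x), y − x⟩ + (μ/2)‖y − x‖² for all x, y ∈ ℝ^n), let x̂ ∈ ℝ^n, and let g(x̂) := sup_{v ∈ X} ⟨∇f(x̂), x̂ − v⟩ (assumed finite). Let J be a finite set of coordinate indices, let j ∈ J be such that x̂_j is not an integer, and let Ĵ := {k ∈ J : k ≠ j and x̂_k ∉ ℤ}. Then every x* ∈ X satisfying x*_j ≤ ⌊x̂_j⌋ and x*_k ∈ ℤ for all k ∈ J satisfies f(x*) ≥ f(x̂) + (μ/2)·(x̂_j − ⌊x̂_j⌋)² + (μ/2)·Σ_{k ∈ Ĵ} min{(x̂_k − ⌊x̂_k⌋)², (⌈x̂_k⌉ − x̂_k)²} − g(x̂). -/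
open scoped RealInnerProductSpace

/-- Strong-convexity node bound tightening: after branching down on a fractional
variable `j` at a relaxed solution `x̂`, every integer-feasible point of the
child node has objective value bounded below by the displayed quantity. -/
theorem strong_convexity_node_bound {n : ℕ} (X : Set (EuclideanSpace ℝ (Fin n)))
    (f : EuclideanSpace ℝ (Fin n) → ℝ) (hdiff : Differentiable ℝ f)
    (μ : ℝ) (hμ : 0 < μ)
    (hsc : ∀ x y : EuclideanSpace ℝ (Fin n),
      f x + ⟪gradient f x, y - x⟫ + μ / 2 * ‖y - x‖ ^ 2 ≤ f y)
    (xhat : EuclideanSpace ℝ (Fin n))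
    (g : ℝ) (hg : IsLUB ((fun v => ⟪gradient f xhat, xhat - v⟫) '' X) g)
    (J : Finset (Fin n)) (j : Fin n) (hjJ : j ∈ J)
    (hjfrac : ¬ ∃ m : ℤ, xhat j = (m : ℝ))
    (Jhat : Finset (Fin n))
    (hJhat : ∀ k, k ∈ Jhat ↔ k ∈ J ∧ k ≠ j ∧ ¬ ∃ m : ℤ, xhat k = (m : ℝ)) :
    ∀ xstar ∈ X, xstar j ≤ (⌊xhat j⌋ : ℝ) → (∀ k ∈ J, ∃ m : ℤ, xstar k = (m : ℝ)) →
      f xhat + μ / 2 * (xhat j - (⌊xhat j⌋ : ℝ)) ^ 2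
          + μ / 2 * ∑ k ∈ Jhat,
              min ((xhat k - (⌊xhat k⌋ : ℝ)) ^ 2) (((⌈xhat k⌉ : ℝ) - xhat k) ^ 2)
          - g
        ≤ f xstar := by
  intro xs hxs hj hint
  have h1 := hsc xhat xs
  have h2 : ⟪gradient f xhat, xhat - xs⟫ ≤ g := hg.1 ⟨xs, hxs, rfl⟩
  have h3 : ⟪gradient f xhat, xs - xhat⟫ = - ⟪gradient f xhat, xhat - xs⟫ := by
    rw [← inner_neg_right, neg_sub]
  have hnorm : ‖xs - xhat‖ ^ 2 = ∑ k, (xs k - xhat k) ^ 2 := by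
    rw [EuclideanSpace.norm_sq_eq]
    simp
  have hjn : j ∉ Jhat := fun h => ((hJhat j).1 h).2.1 rfl
  have hsub : ∑ k ∈ insert j Jhat, (xs k - xhat k) ^ 2 ≤ ∑ k, (xs k - xhat k) ^ 2 :=
    Finset.sum_le_sum_of_subset_of_nonneg (Finset.subset_univ _)
      (fun _ _ _ => sq_nonneg _)
  rw [Finset.sum_insert hjn] at hsub
  have hjb : (xhat j - (⌊xhat j⌋ : ℝ)) ^ 2 ≤ (xs j - xhat j) ^ 2 := by
    have := Int.floor_le (xhat j)
    nlinarith
  have hk : ∑ k ∈ Jhat,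
      min ((xhat k - (⌊xhat k⌋ : ℝ)) ^ 2) (((⌈xhat k⌉ : ℝ) - xhat k) ^ 2)
      ≤ ∑ k ∈ Jhat, (xs k - xhat k) ^ 2 := by
    apply Finset.sum_le_sum
    intro k hk
    obtain ⟨m, hm⟩ := hint k ((hJhat k).1 hk).1
    rw [hm]
    rcases le_total (m : ℝ) (xhat k) with h | h
    · have a : (m : ℝ) ≤ (⌊xhat k⌋ : ℝ) := by exact_mod_cast Int.le_floor.2 h
      have b := Int.floor_le (xhat k)
      refine (min_le_left _ _).trans ?_
      nlinarith
    · have a : (⌈xhat k⌉ : ℝ) ≤ (m : ℝ) := by exact_mod_cast Int.ceil_le.2 h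
      have b := Int.le_ceil (xhat k)
      refine (min_le_right _ _).trans ?_
      nlinarith
  have h4 := mul_le_mul_of_nonneg_left ((add_le_add hjb hk).trans hsub)
    (by positivity : (0 : ℝ) ≤ μ / 2)
  rw [hnorm, h3] at h1
  rw [mul_add] at h4
  linarith
end

section
/- Let X ⊆ C ⊆ ℝ^n with X nonempty, let f : ℝ^n → ℝ be convex and differentiable, and suppose f has a unique minimizer x* over X with x* ∈ X and f* := f(x*). Suppose f satisfies a (θ, M)-Hölder error bound on C: there exist θ ∈ (0, 1/2] and M > 0 such that ‖x − x*‖ ≤ M·(f(x) − f*)^θ for all x ∈ C with f(x) ≥ f*. Let x̂ ∈ C, let g(x̂) := sup_{v ∈ X} ⟨∇f(x̂), x̂ − v⟩ (assumed finite), and assume f(x̂) ≥ f*. Then for every y ∈ C with f(y) ≥ f* and ‖y − x̂‖ ≥ M·g(x̂)^θ, one has f(y) ≥ M^{−1/θ}·(‖y − x̂‖ − M·g(x̂)^θ)^{1/θ} + f(x̂) − g(x̂). -/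
open scoped RealInnerProductSpace

/-- Sharpness-based lower bound on the objective value of a child node. -/
theorem sharpness_node_bound {n : ℕ}
    (X C : Set (EuclideanSpace ℝ (Fin n))) (hXC : X ⊆ C) (hXne : X.Nonempty)
    (f : EuclideanSpace ℝ (Fin n) → ℝ)
    (hconv : ConvexOn ℝ Set.univ f) (hdiff : Differentiable ℝ f)
    (xstar : EuclideanSpace ℝ (Fin n)) (hxstarX : xstar ∈ X)
    (hmin : ∀ x ∈ X, f xstar ≤ f x)
    (huniq : ∀ y ∈ X, (∀ x ∈ X, f y ≤ f x) → y = xstar)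
    (θ M : ℝ) (hθ : θ ∈ Set.Ioc (0 : ℝ) (1 / 2)) (hM : 0 < M)
    (hsharp : ∀ x ∈ C, f xstar ≤ f x → ‖x - xstar‖ ≤ M * (f x - f xstar) ^ θ)
    (xhat : EuclideanSpace ℝ (Fin n)) (hxhatC : xhat ∈ C)
    (g : ℝ) (hg : IsLUB ((fun v => ⟪gradient f xhat, xhat - v⟫) '' X) g)
    (hfxhat : f xstar ≤ f xhat) :
    ∀ y ∈ C, f xstar ≤ f y → M * g ^ θ ≤ ‖y - xhat‖ →
      M ^ (-(1 / θ)) * (‖y - xhat‖ - M * g ^ θ) ^ (1 / θ) + f xhat - g ≤ f y := by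
  intro y hyC hfy hdist
  obtain ⟨hθ0, -⟩ := hθ
  -- gradient inequality
  have hgrad : f xhat - f xstar ≤ ⟪gradient f xhat, xhat - xstar⟫ := by
    have hc : ConvexOn ℝ Set.univ (f ∘ (AffineMap.lineMap xhat xstar : ℝ →ᵃ[ℝ] _)) := by
      simpa using hconv.comp_affineMap (AffineMap.lineMap xhat xstar : ℝ →ᵃ[ℝ] _)
    have hd : HasDerivAt (f ∘ (AffineMap.lineMap xhat xstar : ℝ →ᵃ[ℝ] _))
        (fderiv ℝ f xhat (xstar - xhat)) 0 := by
      have h1 : HasDerivAt (AffineMap.lineMap xhat xstar : ℝ →ᵃ[ℝ] _) (xstar - xhat) (0 : ℝ) :=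
        AffineMap.hasDerivAt_lineMap
      have h2 : HasFDerivAt f (fderiv ℝ f xhat)
          ((AffineMap.lineMap xhat xstar : ℝ →ᵃ[ℝ] _) (0 : ℝ)) := by
        simpa using (hdiff xhat).hasFDerivAt
      exact h2.comp_hasDerivAt 0 h1
    have h := hc.le_slope_of_hasDerivAt (Set.mem_univ 0) (Set.mem_univ 1) one_pos hd
    simp [slope_def_field] at h
    have h3 : ⟪gradient f xhat, xhat - xstar⟫ = fderiv ℝ f xhat (xhat - xstar) := by
      simp [gradient]
    rw [h3, map_sub]
    linarith
  have hgle : ⟪gradient f xhat, xhat - xstar⟫ ≤ g := hg.1 ⟨xstar, hxstarX, rfl⟩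
  have hfg : f xhat - f xstar ≤ g := hgrad.trans hgle
  have h1 : ‖xhat - xstar‖ ≤ M * g ^ θ := by
    refine (hsharp xhat hxhatC hfxhat).trans ?_
    have := Real.rpow_le_rpow (sub_nonneg.2 hfxhat) hfg hθ0.le
    gcongr
  have h2 : ‖y - xhat‖ ≤ ‖y - xstar‖ + ‖xhat - xstar‖ := by
    rw [norm_sub_rev xhat xstar]
    exact norm_sub_le_norm_sub_add_norm_sub y xstar xhat
  have h3 : ‖y - xhat‖ - M * g ^ θ ≤ M * (f y - f xstar) ^ θ := by
    linarith [hsharp y hyC hfy]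
  have hnn : 0 ≤ f y - f xstar := sub_nonneg.2 hfy
  have h4 : (‖y - xhat‖ - M * g ^ θ) ^ (1 / θ) ≤ M ^ (1 / θ) * (f y - f xstar) := by
    refine (Real.rpow_le_rpow (sub_nonneg.2 hdist) h3 (by positivity)).trans_eq ?_
    rw [Real.mul_rpow hM.le (by positivity), ← Real.rpow_mul hnn,
      mul_one_div_cancel hθ0.ne', Real.rpow_one]
  have h5 : M ^ (-(1 / θ)) * (‖y - xhat‖ - M * g ^ θ) ^ (1 / θ) ≤ f y - f xstar := by
    rw [Real.rpow_neg hM.le, inv_mul_le_iff₀ (by positivity)]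
    exact h4
  linarith
end
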